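/- For every ρ ∈ [1/3, 1), ∫_{−∞}^{∞} e^{−2|z−ξ_ρ|}(ρ − c(z)) dz = (3/2)·(1−ρ)·(ρ − 1/3). Equivalently, since ∫_{−∞}^{∞} ψ_ρ(x) dx = 1, the average cost of the invariant density ψ_ρ is ∫_{−∞}^{∞} c(x)·ψ_ρ(x) dx = ρ − (3/2)·(1−ρ)·(ρ − 1/3). -/

import Mathlib

/-!
Write `ξ = ξ_ρ` and `s = e^ξ = (3/2)(1 - ρ)`; since `ρ ≥ 1/3`, `s ≤ 1` and so `ξ ≤ 0`.
As `c(z) = 1 - e^{-|z|}`, everything reduces to two integrals: the mass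
`∫ e^{-2|z-ξ|} dz = 1` (`integral_laplace`) and the overlap
`K = ∫ e^{-2|z-ξ|} e^{-|z|} dz` (`integral_overlap`). The latter is split at `ξ` and `0`; the
three pieces `z ≤ ξ`, `ξ < z ≤ 0`, `z > 0` contribute `s/3`, `s - s²` and `s²/3`, so
`K = (4/3) s - (2/3) s²`. Substituting `1 - ρ = (2/3) s` gives
`ρ - 1 + K = s (ρ - 1/3)`.
-/

open MeasureTheory Real

/-- `ξ_ρ = log(3/2) + log(1-ρ)`. -/
noncomputable def xiRho (ρ : ℝ) : ℝ := Real.log (3 / 2) + Real.log (1 - ρ)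

/-- The running cost `c(x) = 1 - e^{-|x|}`. -/
noncomputable def runCost (x : ℝ) : ℝ := 1 - Real.exp (-|x|)

/-- The invariant probability density `ψ_ρ(x) = e^{-2|x-ξ_ρ|}` of the diffusion
controlled by `w_ρ(x) = -sgn(x-ξ_ρ)`. -/
noncomputable def psiRho (ρ x : ℝ) : ℝ := Real.exp (-(2 * |x - xiRho ρ|))

lemma hasMass_Iic {f : ℝ → ℝ} {a C b : ℝ} (ha : 0 < a)
    (h : ∀ z ≤ b, f z = C * exp (a * z)) :
    IntegrableOn f (Set.Iic b) ∧ ∫ z in Set.Iic b, f z = C * (exp (a * b) / a) := by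
  have h' : Set.EqOn f (fun z => C * exp (a * z)) (Set.Iic b) := fun z hz => h z hz
  refine ⟨?_, ?_⟩
  · rw [integrableOn_congr_fun h' measurableSet_Iic]
    exact (integrableOn_exp_mul_Iic ha b).const_mul C
  · rw [setIntegral_congr_fun measurableSet_Iic h', integral_const_mul, integral_exp_mul_Iic ha]

lemma hasMass_Ioi {f : ℝ → ℝ} {a C b : ℝ} (ha : a < 0)
    (h : ∀ z > b, f z = C * exp (a * z)) :
    IntegrableOn f (Set.Ioi b) ∧ ∫ z in Set.Ioi b, f z = C * (-exp (a * b) / a) := by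
  have h' : Set.EqOn f (fun z => C * exp (a * z)) (Set.Ioi b) := fun z hz => h z hz
  refine ⟨?_, ?_⟩
  · rw [integrableOn_congr_fun h' measurableSet_Ioi]
    exact (integrableOn_exp_mul_Ioi ha b).const_mul C
  · rw [setIntegral_congr_fun measurableSet_Ioi h', integral_const_mul, integral_exp_mul_Ioi ha]

lemma integral_laplace (ξ : ℝ) :
    Integrable (fun z : ℝ => exp (-(2 * |z - ξ|))) ∧ ∫ z : ℝ, exp (-(2 * |z - ξ|)) = 1 := by
  obtain ⟨i1, e1⟩ := hasMass_Iic (f := fun z : ℝ => exp (-(2 * |z - ξ|))) (a := 2)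
    (C := exp (-2 * ξ)) (b := ξ) (by norm_num) (fun z hz => by
      rw [abs_of_nonpos (by linarith), ← exp_add]; ring_nf)
  obtain ⟨i2, e2⟩ := hasMass_Ioi (f := fun z : ℝ => exp (-(2 * |z - ξ|))) (a := -2)
    (C := exp (2 * ξ)) (b := ξ) (by norm_num) (fun z hz => by
      rw [abs_of_nonneg (by linarith), ← exp_add]; ring_nf)
  have hmul : exp (-2 * ξ) * exp (2 * ξ) = 1 := by rw [← exp_add]; simp
  refine ⟨?_, ?_⟩
  · rw [← integrableOn_univ, ← Set.Iic_union_Ioi (a := ξ)]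
    exact i1.union i2
  · rw [← intervalIntegral.integral_Iic_add_Ioi i1 i2, e1, e2]
    linarith

/-- The sign condition `ξ ≤ 0` fixes the order of the two kinks `ξ` and `0` of the integrand. -/
lemma integral_overlap {ξ : ℝ} (hξ : ξ ≤ 0) :
    Integrable (fun z : ℝ => exp (-(2 * |z - ξ|)) * exp (-|z|)) ∧
    ∫ z : ℝ, exp (-(2 * |z - ξ|)) * exp (-|z|) = 4 / 3 * exp ξ - 2 / 3 * exp ξ ^ 2 := by
  set f : ℝ → ℝ := fun z => exp (-(2 * |z - ξ|)) * exp (-|z|) with hf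
  obtain ⟨i1, e1⟩ := hasMass_Iic (f := f) (a := 3)
    (C := exp (-2 * ξ)) (b := ξ) (by norm_num) (fun z hz => by
      simp only [hf]
      rw [abs_of_nonpos (by linarith), abs_of_nonpos (by linarith), ← exp_add, ← exp_add]
      ring_nf)
  obtain ⟨i3, e3⟩ := hasMass_Ioi (f := f) (a := -3)
    (C := exp (2 * ξ)) (b := 0) (by norm_num) (fun z hz => by
      simp only [hf]
      rw [abs_of_nonneg (by linarith), abs_of_nonneg (by linarith), ← exp_add, ← exp_add]
      ring_nf)
  have i2 : IntegrableOn f (Set.Ioc ξ 0) := by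
    have hc : Continuous f := by fun_prop
    exact hc.integrableOn_Ioc
  have e2 : ∫ z in Set.Ioc ξ 0, f z = exp (2 * ξ) * (exp (-ξ) - 1) := by
    have h' : Set.EqOn f (fun z => exp (2 * ξ) * exp (-z)) (Set.Ioc ξ 0) := fun z hz => by
      simp only [hf]
      rw [abs_of_nonneg (by linarith [hz.1]), abs_of_nonpos hz.2, ← exp_add, ← exp_add]
      ring_nf
    rw [setIntegral_congr_fun measurableSet_Ioc h', integral_const_mul,
      ← intervalIntegral.integral_of_le hξ, intervalIntegral.integral_comp_neg (fun x => exp x),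
      integral_exp]
    simp
  have i23 : IntegrableOn f (Set.Ioi ξ) := by
    rw [← Set.Ioc_union_Ioi_eq_Ioi hξ]
    exact i2.union i3
  refine ⟨?_, ?_⟩
  · rw [← integrableOn_univ, ← Set.Iic_union_Ioi (a := ξ)]
    exact i1.union i23
  · rw [← intervalIntegral.integral_Iic_add_Ioi i1 i23, ← Set.Ioc_union_Ioi_eq_Ioi hξ,
      setIntegral_union (Set.Ioc_disjoint_Ioi le_rfl) measurableSet_Ioi i2 i3, e1, e2, e3]
    have h1 : exp (-2 * ξ) * exp (3 * ξ) = exp ξ := by rw [← exp_add]; ring_nf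
    have h2 : exp (2 * ξ) = exp ξ ^ 2 := by rw [← exp_nat_mul]; norm_num
    have h3 : exp ξ * exp (-ξ) = 1 := by rw [← exp_add]; simp
    rw [h2, mul_zero, exp_zero]
    linear_combination h1 / 3 + exp ξ * h3

/-- For every `ρ ∈ [1/3, 1)`,
`∫_{-∞}^{∞} e^{-2|z-ξ_ρ|} (ρ - c(z)) dz = (3/2)(1-ρ)(ρ - 1/3)`; equivalently,
since `∫ ψ_ρ = 1`, the average cost is
`∫ c·ψ_ρ = ρ - (3/2)(1-ρ)(ρ - 1/3)`. -/
theorem average_cost_formula (ρ : ℝ) (hρ : ρ ∈ Set.Ico (1 / 3 : ℝ) 1) :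
    (∫ z : ℝ, Real.exp (-(2 * |z - xiRho ρ|)) * (ρ - runCost z)
        = 3 / 2 * (1 - ρ) * (ρ - 1 / 3)) ∧
    (∫ x : ℝ, psiRho ρ x = 1) ∧
    (∫ x : ℝ, runCost x * psiRho ρ x = ρ - 3 / 2 * (1 - ρ) * (ρ - 1 / 3)) := by
  obtain ⟨h1, h2⟩ := hρ
  have hs : exp (xiRho ρ) = 3 / 2 * (1 - ρ) := by
    rw [xiRho, exp_add, exp_log (by norm_num), exp_log (by linarith)]
  have hξ : xiRho ρ ≤ 0 := by
    rw [← exp_le_one_iff, hs]; linarith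
  obtain ⟨iL, eL⟩ := integral_laplace (xiRho ρ)
  obtain ⟨iK, eK⟩ := integral_overlap hξ
  rw [hs] at eK
  refine ⟨?_, eL, ?_⟩
  · have : ∀ z : ℝ, exp (-(2 * |z - xiRho ρ|)) * (ρ - runCost z)
        = (ρ - 1) * exp (-(2 * |z - xiRho ρ|))
          + exp (-(2 * |z - xiRho ρ|)) * exp (-|z|) := fun z => by
      rw [runCost]; ring
    simp_rw [this]
    rw [integral_add (iL.const_mul _) iK, integral_const_mul, eL, eK]
    ring
  · have : ∀ z : ℝ, runCost z * psiRho ρ z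
        = exp (-(2 * |z - xiRho ρ|))
          - exp (-(2 * |z - xiRho ρ|)) * exp (-|z|) := fun z => by
      rw [runCost, psiRho]; ring
    simp_rw [this]
    rw [integral_sub iL iK, eL, eK]
    ring
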